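/- arXiv:math/0508227 — 17 statements merged into one kernel-verified Lean document; each statement's English description precedes it below -/
import Mathlib

section
/- Let β > 0 and δ > 0. Consider the generalized continued fraction with initial term b₀ = 2β, partial numerators a_k = ((k+1)(k+2)/2)·δ (the triangular numbers 3, 6, 10, 15, ... times δ), and partial denominators b_k = (k+2)·β for k ≥ 1. Then the sequence of convergents h_n/k_n converges to β + √(β² + 2δ). -/
open Filter Topology

theorem euler_cf_triangular
    (β δ : ℝ) (a b num den : ℕ → ℝ)
    (hβ : 0 < β) (hδ : 0 < δ)
    (hb0 : b 0 = 2 * β)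
    (ha : ∀ k : ℕ, 1 ≤ k → a k = ((k + 1) * (k + 2) / 2 : ℝ) * δ)
    (hb : ∀ k : ℕ, 1 ≤ k → b k = ((k : ℝ) + 2) * β)
    (hnum0 : num 0 = 1) (hnum1 : num 1 = b 0)
    (hden0 : den 0 = 0) (hden1 : den 1 = 1)
    (hnum : ∀ n : ℕ, num (n + 2) = b (n + 1) * num (n + 1) + a (n + 1) * num n)
    (hden : ∀ n : ℕ, den (n + 2) = b (n + 1) * den (n + 1) + a (n + 1) * den n) :
    Tendsto (fun n : ℕ => num (n + 1) / den (n + 1)) atTop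
      (𝓝 (β + Real.sqrt (β ^ 2 + 2 * δ))) := by
  set s := Real.sqrt (β ^ 2 + 2 * δ) with hs
  have hs2 : s ^ 2 = β ^ 2 + 2 * δ := Real.sq_sqrt (by positivity)
  have hs0 : 0 < s := Real.sqrt_pos.mpr (by positivity)
  obtain ⟨p, hp⟩ : ∃ p, p = (β + s) / 2 := ⟨_, rfl⟩
  obtain ⟨q, hq⟩ : ∃ q, q = (β - s) / 2 := ⟨_, rfl⟩
  have hp0 : 0 < p := by rw [hp]; positivity
  have hp2 : p ^ 2 = β * p + δ / 2 := by rw [hp]; linear_combination hs2 / 4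
  have hq2 : q ^ 2 = β * q + δ / 2 := by rw [hq]; linear_combination hs2 / 4
  have hpq : p - q = s := by rw [hp, hq]; ring
  have hpq' : p + q = β := by rw [hp, hq]; ring
  have gen : ∀ (y : ℕ → ℝ) (A B : ℝ),
      (∀ n : ℕ, y (n + 2) = b (n + 1) * y (n + 1) + a (n + 1) * y n) →
      y 0 = A + B → y 1 = 2 * (A * p + B * q) →
      ∀ n : ℕ, y n = ((n + 1).factorial : ℝ) * (A * p ^ n + B * q ^ n) := by
    intro y A B hy h0 h1 n
    induction n using Nat.twoStepInduction with
    | zero => simp [h0]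
    | one => simp [h1]
    | more n ih1 ih2 =>
      rw [hy, ih1, ih2, ha (n + 1) (by omega), hb (n + 1) (by omega)]
      have e1 : p ^ (n + 2) = p ^ n * (β * p + δ / 2) := by rw [pow_add, hp2]
      have e2 : q ^ (n + 2) = q ^ n * (β * q + δ / 2) := by rw [pow_add, hq2]
      rw [e1, e2, Nat.factorial_succ (n + 1 + 1), Nat.factorial_succ (n + 1)]
      push_cast
      ring
  have hN := gen num (p / s) (-q / s) hnum
    (by rw [hnum0]; field_simp; linarith)
    (by rw [hnum1, hb0]; field_simp; rw [← hpq, ← hpq']; ring)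
  have hD := gen den (1 / (2 * s)) (-1 / (2 * s)) hden
    (by rw [hden0]; ring)
    (by rw [hden1]; field_simp; linarith)
  have ht : |q / p| < 1 := by
    rw [abs_div, abs_of_pos hp0, div_lt_one hp0, abs_lt]
    constructor <;> linarith
  have hlim : Tendsto (fun n : ℕ => (q / p) ^ (n + 1)) atTop (𝓝 0) :=
    (tendsto_pow_atTop_nhds_zero_of_abs_lt_one ht).comp (tendsto_add_atTop_nat 1)
  have hL : Tendsto (fun n : ℕ => 2 * (p - q * (q / p) ^ (n + 1)) / (1 - (q / p) ^ (n + 1)))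
      atTop (𝓝 (2 * (p - q * 0) / (1 - 0))) :=
    ((tendsto_const_nhds.sub (hlim.const_mul q)).const_mul 2).div
      (tendsto_const_nhds.sub hlim) (by norm_num)
  have hv : 2 * (p - q * 0) / (1 - 0) = β + s := by rw [hp]; ring
  rw [hv] at hL
  refine hL.congr fun n => ?_
  have hlt : (q / p) ^ (n + 1) < 1 := by
    have h1 : |(q / p) ^ (n + 1)| < 1 := by
      rw [abs_pow]; exact pow_lt_one₀ (abs_nonneg _) ht (by omega)
    exact (abs_lt.mp h1).2
  have hf : ((n + 1 + 1).factorial : ℝ) ≠ 0 := by positivity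
  have hqe : q ^ (n + 1) = (q / p) ^ (n + 1) * p ^ (n + 1) := by
    rw [div_pow]; field_simp
  rw [hN, hD, hqe]
  generalize (q / p) ^ (n + 1) = t at hlt
  have hP : p ^ (n + 1) ≠ 0 := by positivity
  generalize p ^ (n + 1) = P at hP
  have h1 : 1 - t ≠ 0 := by linarith
  have hd : 1 / (2 * s) * P + -1 / (2 * s) * (t * P) = (1 - t) * P / (2 * s) := by ring
  have hn : p / s * P + -q / s * (t * P) = (p - q * t) * P / s := by ring
  rw [hd, hn]
  field_simp
end

section
/- Let a > 0, let α, β be real numbers such that α + β·x ≠ 0 for all x in the interval [0, a], and let n ≥ 1 be a natural number. Then n·a·α·∫₀^a x^{n-1}/(α + βx) dx = ((n+1)·α − n·β·a)·∫₀^a x^n/(α + βx) dx + (n+1)·β·∫₀^a x^{n+1}/(α + βx) dx. -/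
theorem euler_aux (a α β : ℝ) (ha : 0 < a)
    (hne : ∀ x ∈ Set.Icc (0 : ℝ) a, α + β * x ≠ 0) (k : ℕ) :
    α * (∫ x in (0 : ℝ)..a, x ^ k / (α + β * x)) +
      β * (∫ x in (0 : ℝ)..a, x ^ (k + 1) / (α + β * x)) = a ^ (k + 1) / ((k : ℝ) + 1) := by
  have hi : ∀ j : ℕ, IntervalIntegrable (fun x : ℝ => x ^ j / (α + β * x))
      MeasureTheory.volume 0 a := by
    intro j
    apply ContinuousOn.intervalIntegrable
    rw [Set.uIcc_of_le ha.le]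
    exact ContinuousOn.div (by fun_prop) (by fun_prop) hne
  rw [← intervalIntegral.integral_const_mul, ← intervalIntegral.integral_const_mul,
    ← intervalIntegral.integral_add ((hi k).const_mul α) ((hi (k + 1)).const_mul β)]
  have h : ∫ x in (0 : ℝ)..a, (α * (x ^ k / (α + β * x)) + β * (x ^ (k + 1) / (α + β * x))) =
      ∫ x in (0 : ℝ)..a, x ^ k := by
    apply intervalIntegral.integral_congr
    intro x hx
    rw [Set.uIcc_of_le ha.le] at hx
    have := hne x hx
    simp only
    rw [← mul_div_assoc, ← mul_div_assoc, ← add_div, div_eq_iff this]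
    ring
  rw [h, integral_pow]
  simp

theorem euler_log_integral_recurrence (a α β : ℝ) (ha : 0 < a)
    (hne : ∀ x ∈ Set.Icc (0 : ℝ) a, α + β * x ≠ 0) (n : ℕ) (hn : 1 ≤ n) :
    (n : ℝ) * a * α * ∫ x in (0 : ℝ)..a, x ^ (n - 1) / (α + β * x) =
      (((n : ℝ) + 1) * α - (n : ℝ) * β * a) * (∫ x in (0 : ℝ)..a, x ^ n / (α + β * x)) +
      ((n : ℝ) + 1) * β * ∫ x in (0 : ℝ)..a, x ^ (n + 1) / (α + β * x) := by
  obtain ⟨m, rfl⟩ : ∃ m, n = m + 1 := ⟨n - 1, by omega⟩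
  have h1 := euler_aux a α β ha hne m
  have h2 := euler_aux a α β ha hne (m + 1)
  rw [eq_div_iff (by positivity)] at h1 h2
  rw [Nat.add_sub_cancel]
  push_cast at h2 ⊢
  linear_combination a * h1 - h2
end

section
/- Consider the generalized continued fraction with initial term b₀ = 1, partial numerators a_k = k², and partial denominators b_k = 1 for all k ≥ 1. Then the sequence of convergents h_n/k_n converges to 1/log 2. -/
open Filter Topology

theorem aux_log_two :
    Tendsto (fun k => ∑ i ∈ Finset.range k, (-1 : ℝ) ^ i / (i + 1)) atTop (𝓝 (Real.log 2)) := by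
  obtain ⟨l, h⟩ :
      ∃ l, Tendsto (fun n ↦ ∑ i ∈ Finset.range n, (-1 : ℝ) ^ i / (i + 1)) atTop (𝓝 l) := by
    apply Antitone.tendsto_alternating_series_of_tendsto_zero
    · exact antitone_iff_forall_lt.mpr fun _ _ _ ↦ by gcongr
    · apply Tendsto.inv_tendsto_atTop; apply tendsto_atTop_add_const_right
      exact tendsto_natCast_atTop_atTop
  have abel := Real.tendsto_tsum_powerSeries_nhdsWithin_lt h
  have m : 𝓝[<] (1 : ℝ) ≤ 𝓝 1 := nhdsWithin_le_nhds
  replace abel := abel.mul m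
  rw [mul_one] at abel
  replace abel : Tendsto (fun x : ℝ => Real.log (1 + x)) (𝓝[<] 1) (𝓝 l) := by
    apply abel.congr'
    filter_upwards [Ioo_mem_nhdsLT (show (0 : ℝ) < 1 by norm_num)] with y hy
    have ny : |-y| < 1 := by rw [abs_lt]; constructor <;> linarith [hy.1, hy.2]
    have hs := (Real.hasSum_pow_div_log_of_abs_lt_one ny).neg.tsum_eq
    rw [neg_neg, sub_neg_eq_add] at hs
    rw [← hs, ← tsum_mul_right]
    congr 1
    funext n
    rw [neg_pow y]
    ring
  have hc : Tendsto (fun x : ℝ => Real.log (1 + x)) (𝓝[<] 1) (𝓝 (Real.log 2)) := by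
    have : ContinuousAt (fun x : ℝ => Real.log (1 + x)) 1 :=
      ContinuousAt.log (by fun_prop) (by norm_num)
    have h2 := this.tendsto.mono_left m
    norm_num at h2
    exact h2
  rwa [tendsto_nhds_unique abel hc] at h

theorem euler_cf_log_two
    (a b num den : ℕ → ℝ)
    (hb0 : b 0 = 1)
    (ha : ∀ k : ℕ, 1 ≤ k → a k = (k : ℝ) ^ 2)
    (hb : ∀ k : ℕ, 1 ≤ k → b k = 1)
    (hnum0 : num 0 = 1) (hnum1 : num 1 = b 0)
    (hden0 : den 0 = 0) (hden1 : den 1 = 1)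
    (hnum : ∀ n : ℕ, num (n + 2) = b (n + 1) * num (n + 1) + a (n + 1) * num n)
    (hden : ∀ n : ℕ, den (n + 2) = b (n + 1) * den (n + 1) + a (n + 1) * den n) :
    Tendsto (fun n : ℕ => num (n + 1) / den (n + 1)) atTop
      (𝓝 (1 / Real.log 2)) := by
  have h1 : ∀ n : ℕ, num n = (n.factorial : ℝ) ∧ num (n + 1) = ((n + 1).factorial : ℝ) := by
    intro n
    induction n with
    | zero => simp [hnum0, hnum1, hb0]
    | succ n ih =>
      refine ⟨ih.2, ?_⟩
      rw [hnum, ih.1, ih.2, ha _ (by omega), hb _ (by omega)]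
      simp only [Nat.factorial_succ]
      push_cast
      ring
  have h2 : ∀ n : ℕ,
      den n = (n.factorial : ℝ) * ∑ i ∈ Finset.range n, (-1 : ℝ) ^ i / (i + 1) ∧
      den (n + 1) = ((n + 1).factorial : ℝ) *
        ∑ i ∈ Finset.range (n + 1), (-1 : ℝ) ^ i / (i + 1) := by
    intro n
    induction n with
    | zero => simp [hden0, hden1]
    | succ n ih =>
      refine ⟨ih.2, ?_⟩
      rw [hden, ih.1, ih.2, ha _ (by omega), hb _ (by omega)]
      simp only [Nat.factorial_succ, Finset.sum_range_succ]
      have e1 : (n : ℝ) + 1 ≠ 0 := by positivity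
      have e2 : (n : ℝ) + 1 + 1 ≠ 0 := by positivity
      push_cast
      field_simp
      ring
  have h3 := ((tendsto_add_atTop_iff_nat 1).2 aux_log_two).inv₀
    (Real.log_pos (by norm_num)).ne'
  rw [one_div]
  refine h3.congr fun n => ?_
  rw [(h1 n).2, (h2 n).2]
  have : ((n + 1).factorial : ℝ) ≠ 0 := by positivity
  rw [div_mul_eq_div_div, div_self this, one_div]
end

section
/- Consider the generalized continued fraction with initial term b₀ = 2, partial numerators a_k = 2k², and partial denominators b_k = k + 2 for all k ≥ 1. Then the sequence of convergents h_n/k_n converges to 1/log(3/2). -/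
open Filter Topology

theorem euler_cf_log_three_halves
    (a b num den : ℕ → ℝ)
    (hb0 : b 0 = 2)
    (ha : ∀ k : ℕ, 1 ≤ k → a k = 2 * (k : ℝ) ^ 2)
    (hb : ∀ k : ℕ, 1 ≤ k → b k = (k : ℝ) + 2)
    (hnum0 : num 0 = 1) (hnum1 : num 1 = b 0)
    (hden0 : den 0 = 0) (hden1 : den 1 = 1)
    (hnum : ∀ n : ℕ, num (n + 2) = b (n + 1) * num (n + 1) + a (n + 1) * num n)
    (hden : ∀ n : ℕ, den (n + 2) = b (n + 1) * den (n + 1) + a (n + 1) * den n) :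
    Tendsto (fun n : ℕ => num (n + 1) / den (n + 1)) atTop
      (𝓝 (1 / Real.log (3 / 2))) := by
  have hN : ∀ n : ℕ, num n = 2 ^ n * (n.factorial : ℝ) ∧
      num (n + 1) = 2 ^ (n + 1) * ((n + 1).factorial : ℝ) := by
    intro n
    induction n with
    | zero => simp [hnum0, hnum1, hb0]
    | succ n ih =>
      refine ⟨ih.2, ?_⟩
      rw [hnum n, ih.1, ih.2, ha _ (by omega), hb _ (by omega)]
      simp only [Nat.factorial_succ]
      push_cast
      ring
  have hD : ∀ n : ℕ,
      den n = -(2 ^ n * (n.factorial : ℝ) *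
        ∑ i ∈ Finset.range n, (-1 / 2 : ℝ) ^ (i + 1) / ((i : ℝ) + 1)) ∧
      den (n + 1) = -(2 ^ (n + 1) * ((n + 1).factorial : ℝ) *
        ∑ i ∈ Finset.range (n + 1), (-1 / 2 : ℝ) ^ (i + 1) / ((i : ℝ) + 1)) := by
    intro n
    induction n with
    | zero => norm_num [hden0, hden1]
    | succ n ih =>
      refine ⟨ih.2, ?_⟩
      rw [hden n, ih.1, ih.2, ha _ (by omega), hb _ (by omega)]
      simp only [Nat.factorial_succ, Finset.sum_range_succ]
      generalize ∑ i ∈ Finset.range n, (-1 / 2 : ℝ) ^ (i + 1) / ((i : ℝ) + 1) = T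
      have h1 : (n : ℝ) + 1 ≠ 0 := by positivity
      have h2 : (n : ℝ) + 1 + 1 ≠ 0 := by positivity
      have h3 : (-1 / 2 : ℝ) ^ n = (-1) ^ n / 2 ^ n := by rw [div_pow]
      push_cast
      simp only [pow_succ, h3]
      field_simp
      ring
  have hS := (Real.hasSum_pow_div_log_of_abs_lt_one (x := (-1 / 2 : ℝ))
    (by rw [abs_lt]; norm_num)).tendsto_sum_nat
  have hlog : 0 < Real.log (3 / 2) := Real.log_pos (by norm_num)
  have h32 : (1 : ℝ) - -1 / 2 = 3 / 2 := by norm_num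
  rw [h32] at hS
  have hS2 := ((tendsto_add_atTop_iff_nat 1).2 hS).neg
  rw [neg_neg] at hS2
  refine (hS2.inv₀ hlog.ne').congr' ?_ |>.trans (by rw [one_div])
  refine Eventually.of_forall fun n => ?_
  simp only
  rw [(hN n).2, (hD n).2]
  have hf : (2 : ℝ) ^ (n + 1) * ((n + 1).factorial : ℝ) ≠ 0 := by positivity
  rw [← mul_neg, div_mul_eq_div_div, div_self hf, one_div]
end

section
/- Let α, β be real numbers such that α + β·x² ≠ 0 for all x in the interval [0, 1], and let n ≥ 1 be a natural number. Then n·α·∫₀¹ x^{n-1}/(α + βx²) dx = ((n+2)·α − n·β)·∫₀¹ x^{n+1}/(α + βx²) dx + (n+2)·β·∫₀¹ x^{n+3}/(α + βx²) dx. -/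
theorem euler_arctan_integral_recurrence (α β : ℝ)
    (hne : ∀ x ∈ Set.Icc (0 : ℝ) 1, α + β * x ^ 2 ≠ 0) (n : ℕ) (hn : 1 ≤ n) :
    (n : ℝ) * α * ∫ x in (0 : ℝ)..1, x ^ (n - 1) / (α + β * x ^ 2) =
      (((n : ℝ) + 2) * α - (n : ℝ) * β) * (∫ x in (0 : ℝ)..1, x ^ (n + 1) / (α + β * x ^ 2)) +
      ((n : ℝ) + 2) * β * ∫ x in (0 : ℝ)..1, x ^ (n + 3) / (α + β * x ^ 2) := by
  obtain ⟨m, rfl⟩ : ∃ m, n = m + 1 := ⟨n - 1, by omega⟩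
  simp only [Nat.add_sub_cancel]
  have hint : ∀ k : ℕ, IntervalIntegrable (fun x : ℝ => x ^ k / (α + β * x ^ 2))
      MeasureTheory.volume 0 1 := by
    intro k
    apply ContinuousOn.intervalIntegrable
    rw [Set.uIcc_of_le zero_le_one]
    exact ContinuousOn.div (by fun_prop) (by fun_prop) hne
  -- the linear relation between consecutive integrals
  have key : ∀ k : ℕ, α * (∫ x in (0 : ℝ)..1, x ^ k / (α + β * x ^ 2)) +
      β * (∫ x in (0 : ℝ)..1, x ^ (k + 2) / (α + β * x ^ 2)) = 1 / ((k : ℝ) + 1) := by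
    intro k
    rw [← intervalIntegral.integral_const_mul, ← intervalIntegral.integral_const_mul,
      ← intervalIntegral.integral_add ((hint k).const_mul α) ((hint (k + 2)).const_mul β)]
    have h : ∫ x in (0 : ℝ)..1, x ^ k = 1 / ((k : ℝ) + 1) := by
      rw [integral_pow]; simp
    rw [← h]
    apply intervalIntegral.integral_congr
    intro x hx
    rw [Set.uIcc_of_le zero_le_one] at hx
    have := hne x hx
    simp only
    field_simp
    ring
  have h1 := key m
  have h2 := key (m + 2)
  have e1 : m + 1 + 1 = m + 2 := rfl
  have e2 : m + 1 + 3 = m + 2 + 2 := rfl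
  rw [e1, e2]
  push_cast at h2 ⊢
  have p1 : (m : ℝ) + 1 ≠ 0 := by positivity
  have p2 : (m : ℝ) + 2 + 1 ≠ 0 := by positivity
  rw [eq_div_iff p1] at h1
  rw [eq_div_iff p2] at h2
  linear_combination h1 - h2
end

section
/- Consider the generalized continued fraction with initial term b₀ = 1, partial numerators a_k = (2k−1)², and partial denominators b_k = 2 for all k ≥ 1. Then the sequence of convergents h_n/k_n converges to 4/π. -/
open Filter Topology

theorem brouncker_cf_four_div_pi
    (a b num den : ℕ → ℝ)
    (hb0 : b 0 = 1)
    (ha : ∀ k : ℕ, 1 ≤ k → a k = (2 * (k : ℝ) - 1) ^ 2)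
    (hb : ∀ k : ℕ, 1 ≤ k → b k = 2)
    (hnum0 : num 0 = 1) (hnum1 : num 1 = b 0)
    (hden0 : den 0 = 0) (hden1 : den 1 = 1)
    (hnum : ∀ n : ℕ, num (n + 2) = b (n + 1) * num (n + 1) + a (n + 1) * num n)
    (hden : ∀ n : ℕ, den (n + 2) = b (n + 1) * den (n + 1) + a (n + 1) * den n) :
    Tendsto (fun n : ℕ => num (n + 1) / den (n + 1)) atTop
      (𝓝 (4 / Real.pi)) := by
  have hN : ∀ n : ℕ, num (n + 1) = (2 * (n : ℝ) + 1) * num n := by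
    intro n
    induction n with
    | zero => rw [hnum0, zero_add, hnum1, hb0]; norm_num
    | succ n ih =>
      rw [hnum n, hb _ (by omega), ha _ (by omega)]
      push_cast
      linear_combination (-(2 * (n : ℝ) + 1)) * ih
  have hpos : ∀ n : ℕ, 0 < num n := by
    intro n
    induction n with
    | zero => rw [hnum0]; norm_num
    | succ n ih => rw [hN n]; positivity
  have hD : ∀ n : ℕ,
      den n = num n * ∑ i ∈ Finset.range n, (-1 : ℝ) ^ i / (2 * i + 1) ∧
      den (n + 1) = num (n + 1) * ∑ i ∈ Finset.range (n + 1), (-1 : ℝ) ^ i / (2 * i + 1) := by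
    intro n
    induction n with
    | zero => simp [hden0, hden1, hnum1, hb0]
    | succ n ih =>
      refine ⟨ih.2, ?_⟩
      obtain ⟨h1, h2⟩ := ih
      rw [hden n, hb _ (by omega), ha _ (by omega), h2, h1, hN (n + 1), hN n,
        Finset.sum_range_succ _ (n + 1), Finset.sum_range_succ _ n]
      have e1 : (2 * (n : ℝ) + 1) ≠ 0 := by positivity
      have e2 : (2 * ((n : ℝ) + 1) + 1) ≠ 0 := by positivity
      push_cast
      field_simp
      ring
  have hlim := ((tendsto_add_atTop_iff_nat 1).2 Real.tendsto_sum_pi_div_four).inv₀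
    (by positivity)
  rw [inv_div] at hlim
  refine hlim.congr fun n => ?_
  rw [(hD n).2]
  have := (hpos (n + 1)).ne'
  rw [div_mul_eq_div_div, div_self this, one_div]
end

section
/- Let α be a real number with α ≥ 1. Consider the generalized continued fraction with initial term b₀ = α + 1, partial numerators a_k = (2k−1)²·α, and partial denominators b_k = (2k+1)·α − (2k−1) for all k ≥ 1. Then the sequence of convergents h_n/k_n converges to 1 + √α / arctan(1/√α). -/
open Filter Topology

/-- Partial sums of the arctangent series at `1/√α`, divided by `√α`. -/
noncomputable def partialD (α : ℝ) (m : ℕ) : ℝ :=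
  ∑ j ∈ Finset.range m, (-1 : ℝ) ^ j / ((2 * (j : ℝ) + 1) * α ^ (j + 1))

/-- The difference of numerator and denominator of the convergents. -/
noncomputable def prodU (α : ℝ) (m : ℕ) : ℝ :=
  ∏ j ∈ Finset.range m, ((2 * (j : ℝ) + 1) * α)

lemma tendsto_partialD (α : ℝ) (hα : 1 ≤ α) :
    Tendsto (partialD α) atTop (𝓝 (Real.arctan (1 / Real.sqrt α) / Real.sqrt α)) := by
  rcases hα.eq_or_lt with rfl | h
  · have := Real.tendsto_sum_pi_div_four
    simpa [
      show partialD 1 = fun m => ∑ j ∈ Finset.range m, (-1 : ℝ) ^ j / ((2 * (j : ℝ) + 1) * 1 ^ (j + 1)) from rfl] using this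
  · have hs : 1 < Real.sqrt α := by
      rw [Real.lt_sqrt] <;> linarith
    have hs0 : 0 < Real.sqrt α := by linarith
    have hx : ‖1 / Real.sqrt α‖ < 1 := by
      rw [Real.norm_of_nonneg (by positivity), div_lt_one hs0]
      exact hs
    have := ((Real.hasSum_arctan hx).div_const (Real.sqrt α)).tendsto_sum_nat
    refine this.congr fun n => Finset.sum_congr rfl fun j _ => ?_
    have e : α ^ (j + 1) = Real.sqrt α ^ (2 * j + 1) * Real.sqrt α := by
      rw [← pow_succ, show 2 * j + 1 + 1 = 2 * (j + 1) by ring, pow_mul,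
        Real.sq_sqrt (by linarith)]
    rw [e]
    push_cast
    rw [one_div, inv_pow]
    field_simp

theorem euler_cf_arctan
    (α : ℝ) (a b num den : ℕ → ℝ)
    (hα : 1 ≤ α)
    (hb0 : b 0 = α + 1)
    (ha : ∀ k : ℕ, 1 ≤ k → a k = (2 * (k : ℝ) - 1) ^ 2 * α)
    (hb : ∀ k : ℕ, 1 ≤ k → b k = (2 * (k : ℝ) + 1) * α - (2 * (k : ℝ) - 1))
    (hnum0 : num 0 = 1) (hnum1 : num 1 = b 0)
    (hden0 : den 0 = 0) (hden1 : den 1 = 1)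
    (hnum : ∀ n : ℕ, num (n + 2) = b (n + 1) * num (n + 1) + a (n + 1) * num n)
    (hden : ∀ n : ℕ, den (n + 2) = b (n + 1) * den (n + 1) + a (n + 1) * den n) :
    Tendsto (fun n : ℕ => num (n + 1) / den (n + 1)) atTop
      (𝓝 (1 + Real.sqrt α / Real.arctan (1 / Real.sqrt α))) := by
  have hα0 : 0 < α := by linarith
  have hU : ∀ m, prodU α m ≠ 0 := fun m =>
    Finset.prod_ne_zero_iff.mpr fun j _ => by positivity
  have hUs : ∀ m, prodU α (m + 1) = prodU α m * ((2 * (m : ℝ) + 1) * α) := fun m =>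
    Finset.prod_range_succ _ _
  have hDs : ∀ m, partialD α (m + 1) =
      partialD α m + (-1 : ℝ) ^ m / ((2 * (m : ℝ) + 1) * α ^ (m + 1)) := fun m =>
    Finset.sum_range_succ _ _
  have hU0 : prodU α 0 = 1 := by simp [prodU]
  have hD0 : partialD α 0 = 0 := by simp [partialD]
  have key : ∀ m, (den m = prodU α m * partialD α m ∧
      den (m + 1) = prodU α (m + 1) * partialD α (m + 1)) ∧
      (num m = prodU α m + den m ∧ num (m + 1) = prodU α (m + 1) + den (m + 1)) := by
    intro m
    induction m with
    | zero =>
      refine ⟨⟨by rw [hden0, hD0, mul_zero], ?_⟩, by rw [hnum0, hden0, hU0, add_zero], ?_⟩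
      · rw [hUs, hDs, hU0, hD0, zero_add, hden1]
        simp [hα0.ne']
      · rw [zero_add, hnum1, hb0, hden1, ← zero_add 1, hUs, hU0]
        simp
    | succ m ih =>
      obtain ⟨⟨h1, h2⟩, h3, h4⟩ := ih
      refine ⟨⟨h2, ?_⟩, h4, ?_⟩
      · rw [hden, ha _ (by omega), hb _ (by omega), h1, h2, hUs (m + 1), hUs m, hDs (m + 1), hDs m]
        push_cast
        have : (2 * ((m : ℝ) + 1) + 1) ≠ 0 := by positivity
        field_simp
        ring
      · rw [hnum, hden, ha _ (by omega), hb _ (by omega), h3, h4, hUs (m + 1), hUs m]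
        push_cast
        ring
  have hs0 : 0 < Real.sqrt α := Real.sqrt_pos.mpr hα0
  have hat : 0 < Real.arctan (1 / Real.sqrt α) := Real.arctan_pos.mpr (by positivity)
  have hL : Real.arctan (1 / Real.sqrt α) / Real.sqrt α ≠ 0 := by positivity
  have hT := (tendsto_partialD α hα).comp (tendsto_add_atTop_nat 1)
  have hT2 := (hT.inv₀ hL).const_add 1
  rw [inv_div] at hT2
  refine hT2.congr' ?_
  filter_upwards [hT.eventually_ne hL] with n hn
  simp only [Function.comp_apply] at hn ⊢
  rw [(key n).2.2, (key n).1.2]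
  have := hU (n + 1)
  field_simp
  ring
end

section
/- Consider the generalized continued fraction with initial term b₀ = 4, partial numerators a_k = 3·(2k−1)², and partial denominators b_k = 4·(k+1) for all k ≥ 1. Then the sequence of convergents h_n/k_n converges to 1 + 6·√3/π. -/
open Filter Topology

theorem euler_cf_six_sqrt_three_div_pi
    (a b num den : ℕ → ℝ)
    (hb0 : b 0 = 4)
    (ha : ∀ k : ℕ, 1 ≤ k → a k = 3 * (2 * (k : ℝ) - 1) ^ 2)
    (hb : ∀ k : ℕ, 1 ≤ k → b k = 4 * ((k : ℝ) + 1))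
    (hnum0 : num 0 = 1) (hnum1 : num 1 = b 0)
    (hden0 : den 0 = 0) (hden1 : den 1 = 1)
    (hnum : ∀ n : ℕ, num (n + 2) = b (n + 1) * num (n + 1) + a (n + 1) * num n)
    (hden : ∀ n : ℕ, den (n + 2) = b (n + 1) * den (n + 1) + a (n + 1) * den n) :
    Tendsto (fun n : ℕ => num (n + 1) / den (n + 1)) atTop
      (𝓝 (1 + 6 * Real.sqrt 3 / Real.pi)) := by
  set P : ℕ → ℝ := fun m => ∏ j ∈ Finset.range m, (3 * (2 * (j : ℝ) + 1)) with hP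
  set t : ℕ → ℝ := fun k => (-1) ^ k / (3 ^ (k + 1) * (2 * (k : ℝ) + 1)) with ht
  set S : ℕ → ℝ := fun m => ∑ k ∈ Finset.range m, t k with hS
  have P0 : P 0 = 1 := by simp [hP]
  have Ps : ∀ m, P (m + 1) = P m * (3 * (2 * (m : ℝ) + 1)) := fun m => Finset.prod_range_succ _ _
  have Ss : ∀ m, S (m + 1) = S m + t m := fun m => Finset.sum_range_succ _ _
  have S0 : S 0 = 0 := by simp [hS]
  have Ppos : ∀ m, 0 < P m := fun m => Finset.prod_pos (fun j _ => by positivity)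
  have tr : ∀ m : ℕ, t (m + 1) * (3 * (2 * (m : ℝ) + 3)) = - ((2 * (m : ℝ) + 1) * t m) := by
    intro m
    have h1 : (2 * (m : ℝ) + 1) ≠ 0 := by positivity
    have h2 : (2 * (m : ℝ) + 3) ≠ 0 := by positivity
    have h3 : (2 * ((m : ℝ) + 1) + 1) ≠ 0 := by positivity
    simp only [ht]
    push_cast
    rw [show (2 * ((m : ℝ) + 1) + 1) = 2 * (m : ℝ) + 3 by ring]
    field_simp
    ring
  have ha' : ∀ n : ℕ, a (n + 1) = 3 * (2 * (n : ℝ) + 1) ^ 2 := by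
    intro n; rw [ha _ (by omega)]; push_cast; ring
  have hb' : ∀ n : ℕ, b (n + 1) = 4 * ((n : ℝ) + 2) := by
    intro n; rw [hb _ (by omega)]; push_cast; ring
  have t0 : t 0 = 1 / 3 := by norm_num [ht]
  have key : ∀ m, (num m = den m + P m ∧ den m = P m * S m) ∧
      (num (m + 1) = den (m + 1) + P (m + 1) ∧ den (m + 1) = P (m + 1) * S (m + 1)) := by
    intro m
    induction m with
    | zero =>
      rw [Ps, Ss, P0, S0, t0, hnum0, hden0, hnum1, hden1, hb0]
      norm_num
    | succ m ih =>
      obtain ⟨⟨h1, h2⟩, h3, h4⟩ := ih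
      refine ⟨⟨h3, h4⟩, ?_, ?_⟩
      · rw [hnum, hden, h3, h1, ha', hb', Ps (m + 1), Ps m]
        push_cast
        ring
      · rw [hden, h4, h2, ha', hb', Ps (m + 1), Ps m, Ss (m + 1), Ss m]
        push_cast
        linear_combination (-P m * (3 * (2 * (m : ℝ) + 1))) * tr m
  have hs3 : Real.sqrt 3 * Real.sqrt 3 = 3 := Real.mul_self_sqrt (by norm_num)
  have hs0 : (0 : ℝ) < Real.sqrt 3 := by positivity
  have hlt : ‖(1 / Real.sqrt 3 : ℝ)‖ < 1 := by
    rw [Real.norm_of_nonneg (by positivity), div_lt_one hs0]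
    nlinarith
  have hat : Real.arctan (1 / Real.sqrt 3) = Real.pi / 6 := by
    rw [← Real.tan_pi_div_six]
    exact Real.arctan_tan (by linarith [Real.pi_pos]) (by linarith [Real.pi_pos])
  have hsum := (Real.hasSum_arctan hlt).tendsto_sum_nat
  rw [hat] at hsum
  have hS' : Tendsto S atTop (𝓝 (Real.sqrt 3 / 3 * (Real.pi / 6))) := by
    refine (hsum.const_mul (Real.sqrt 3 / 3)).congr fun m => ?_
    rw [Finset.mul_sum]
    refine Finset.sum_congr rfl fun k _ => ?_
    have h1 : (2 * (k : ℝ) + 1) ≠ 0 := by positivity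
    have h2 : (1 / Real.sqrt 3) ^ (2 * k + 1) = 1 / (3 ^ k * Real.sqrt 3) := by
      rw [div_pow, one_pow, pow_succ, pow_mul, sq, hs3]
    simp only [ht]
    rw [h2]
    push_cast
    field_simp
    ring
  have hlim := (hS'.inv₀ (by have := Real.pi_pos; positivity)).const_add 1
  have hval : 1 + (Real.sqrt 3 / 3 * (Real.pi / 6))⁻¹ = 1 + 6 * Real.sqrt 3 / Real.pi := by
    have := Real.pi_pos
    field_simp
    nlinarith
  rw [hval] at hlim
  have hne : ∀ᶠ m in atTop, S m ≠ 0 :=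
    hS'.eventually_ne (by have := Real.pi_pos; positivity)
  refine (tendsto_add_atTop_iff_nat (f := fun n => num n / den n) 1).2 (hlim.congr' ?_)
  filter_upwards [hne] with m hm
  have hp := (Ppos m).ne'
  rw [(key m).1.1, (key m).1.2]
  field_simp
end

section
/- Let α, β be real numbers with α ≥ β > 0. Consider the generalized continued fraction with initial term b₀ = α + β, partial numerators a_k = (2k−1)²·α·β, and partial denominators b_k = (2k+1)·α − (2k−1)·β for all k ≥ 1. Then the sequence of convergents h_n/k_n converges to β + √(αβ) / arctan(√(β/α)). -/
open Filter Topology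

theorem euler_cf_arctan_general
    (α β : ℝ) (a b num den : ℕ → ℝ)
    (hβ : 0 < β) (hαβ : β ≤ α)
    (hb0 : b 0 = α + β)
    (ha : ∀ k : ℕ, 1 ≤ k → a k = (2 * (k : ℝ) - 1) ^ 2 * α * β)
    (hb : ∀ k : ℕ, 1 ≤ k → b k = (2 * (k : ℝ) + 1) * α - (2 * (k : ℝ) - 1) * β)
    (hnum0 : num 0 = 1) (hnum1 : num 1 = b 0)
    (hden0 : den 0 = 0) (hden1 : den 1 = 1)
    (hnum : ∀ n : ℕ, num (n + 2) = b (n + 1) * num (n + 1) + a (n + 1) * num n)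
    (hden : ∀ n : ℕ, den (n + 2) = b (n + 1) * den (n + 1) + a (n + 1) * den n) :
    Tendsto (fun n : ℕ => num (n + 1) / den (n + 1)) atTop
      (𝓝 (β + Real.sqrt (α * β) / Real.arctan (Real.sqrt (β / α)))) := by
  have hα : 0 < α := lt_of_lt_of_le hβ hαβ
  obtain ⟨t, ht⟩ : ∃ t : ℕ → ℝ, ∀ k, t k = (-β) ^ k / ((2 * (k : ℝ) + 1) * α ^ (k + 1)) :=
    ⟨_, fun _ => rfl⟩
  have htrec : ∀ n : ℕ, (2 * (n : ℝ) + 3) * α * t (n + 1) = -β * (2 * (n : ℝ) + 1) * t n := by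
    intro n
    have h1 : (2 * (n : ℝ) + 1) ≠ 0 := by positivity
    have h2 : (2 * (n : ℝ) + 3) ≠ 0 := by positivity
    have h3 : (2 * ((n : ℝ) + 1) + 1) ≠ 0 := by positivity
    rw [ht, ht]
    push_cast
    field_simp
    ring
  obtain ⟨P, hP⟩ : ∃ P : ℕ → ℝ, ∀ n, P n = ∏ k ∈ Finset.range n, ((2 * (k : ℝ) + 1) * α) :=
    ⟨_, fun _ => rfl⟩
  obtain ⟨S, hS⟩ : ∃ S : ℕ → ℝ, ∀ n, S n = ∑ k ∈ Finset.range n, t k := ⟨_, fun _ => rfl⟩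
  have hP0 : P 0 = 1 := by simp [hP]
  have hPs : ∀ n, P (n + 1) = P n * ((2 * (n : ℝ) + 1) * α) := by
    intro n; rw [hP, hP, Finset.prod_range_succ]
  have hS0 : S 0 = 0 := by simp [hS]
  have hSs : ∀ n, S (n + 1) = S n + t n := by
    intro n; rw [hS, hS, Finset.sum_range_succ]
  have hPpos : ∀ n, 0 < P n := by
    intro n; rw [hP]; exact Finset.prod_pos fun k _ => by positivity
  have ht0 : t 0 = 1 / α := by simp [ht]
  have key : ∀ n, (den n = P n * S n ∧ num n = β * den n + P n) ∧
      (den (n + 1) = P (n + 1) * S (n + 1) ∧ num (n + 1) = β * den (n + 1) + P (n + 1)) := by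
    intro n
    induction n with
    | zero =>
      refine ⟨⟨by rw [hden0, hS0, mul_zero], by rw [hnum0, hden0, hP0]; ring⟩, ?_, ?_⟩
      · rw [hden1, hPs, hSs, hP0, hS0, ht0]; field_simp; simp
      · rw [zero_add, hnum1, hden1, hb0, ← zero_add 1, hPs, hP0]; push_cast; ring
    | succ n ih =>
      obtain ⟨⟨i1, i2⟩, i3, i4⟩ := ih
      refine ⟨⟨i3, i4⟩, ?_, ?_⟩
      · rw [hden, ha _ (by omega), hb _ (by omega), i1, i3, hPs (n + 1), hPs n, hSs (n + 1), hSs n]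
        have := htrec n
        push_cast
        linear_combination (-(P n * (2 * (n : ℝ) + 1) * α)) * this
      · rw [hnum, hden, ha _ (by omega), hb _ (by omega), i2, i4, hPs (n + 1), hPs n]
        push_cast
        ring
  obtain ⟨x, hx⟩ : ∃ x : ℝ, x = Real.sqrt (β / α) := ⟨_, rfl⟩
  have hxpos : 0 < x := by rw [hx]; positivity
  have hxsq : x ^ 2 = β / α := by rw [hx]; exact Real.sq_sqrt (by positivity)
  have hβx : β = x ^ 2 * α := by rw [hxsq]; field_simp
  have hsq : Real.sqrt (α * β) = α * x := by
    rw [hβx, show α * (x ^ 2 * α) = (α * x) ^ 2 by ring]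
    exact Real.sqrt_sq (by positivity)
  have hat : 0 < Real.arctan x := Real.arctan_pos.2 hxpos
  have hx1 : x ≤ 1 := by
    rw [hx]; exact Real.sqrt_le_one.2 ((div_le_one hα).2 hαβ)
  have htx : ∀ k, t k = (α * x)⁻¹ * ((-1) ^ k * x ^ (2 * k + 1) / ((2 * k + 1 : ℕ) : ℝ)) := by
    intro k
    have h1 : (2 * (k : ℝ) + 1) ≠ 0 := by positivity
    rw [ht, hβx, show -(x ^ 2 * α) = (-1) * x ^ 2 * α by ring, mul_pow, mul_pow]
    push_cast
    field_simp
    ring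
  have hlim : Tendsto (fun n => ∑ k ∈ Finset.range n,
      ((-1) ^ k * x ^ (2 * k + 1) / ((2 * k + 1 : ℕ) : ℝ))) atTop (𝓝 (Real.arctan x)) := by
    rcases hx1.lt_or_eq with h | h
    · exact (Real.hasSum_arctan (by rw [Real.norm_eq_abs, abs_of_pos hxpos]; exact h)).tendsto_sum_nat
    · rw [h, Real.arctan_one]
      simpa using Real.tendsto_sum_pi_div_four
  have hSlim : Tendsto S atTop (𝓝 ((α * x)⁻¹ * Real.arctan x)) := by
    have h := hlim.const_mul (α * x)⁻¹
    refine h.congr fun n => ?_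
    rw [hS, Finset.mul_sum]
    exact Finset.sum_congr rfl fun k _ => (htx k).symm
  have hne : (α * x)⁻¹ * Real.arctan x ≠ 0 := by positivity
  have hfin := ((hSlim.comp (tendsto_add_atTop_nat 1)).inv₀ hne).const_add β
  rw [hsq, ← hx]
  have hval : β + α * x / Real.arctan x = β + ((α * x)⁻¹ * Real.arctan x)⁻¹ := by
    rw [mul_inv, inv_inv, div_eq_mul_inv]
  rw [hval]
  refine hfin.congr' ?_
  filter_upwards [(hSlim.comp (tendsto_add_atTop_nat 1)).eventually_ne hne] with n hn
  have hn' : S (n + 1) ≠ 0 := hn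
  have hp := (hPpos (n + 1)).ne'
  obtain ⟨-, h1, h2⟩ := key n
  rw [h2, h1]
  simp only [Function.comp]
  field_simp
end

section
/- Let α, γ be real numbers with α > γ > 0. Consider the generalized continued fraction with initial term b₀ = α − γ, partial numerators a_k = −(2k−1)²·α·γ, and partial denominators b_k = (2k+1)·α + (2k−1)·γ for all k ≥ 1. Then the sequence of convergents h_n/k_n converges to −γ + 2·√(αγ) / log((√α + √γ)/(√α − √γ)). -/
open Filter Topology

lemma euler_cf_aux (α r : ℝ) (num den P : ℕ → ℝ) (hα : 0 < α)
    (hP0 : P 0 = 1) (hP : ∀ n, P (n + 1) = (2 * (n : ℝ) + 1) * α * P n)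
    (hnum0 : num 0 = 1) (hnum1 : num 1 = α - r * α)
    (hden0 : den 0 = 0) (hden1 : den 1 = 1)
    (hnum : ∀ n : ℕ, num (n + 2) = ((2 * (n : ℝ) + 3) * α + (2 * (n : ℝ) + 1) * (r * α)) * num (n + 1)
      + -((2 * (n : ℝ) + 1) ^ 2 * α * (r * α)) * num n)
    (hden : ∀ n : ℕ, den (n + 2) = ((2 * (n : ℝ) + 3) * α + (2 * (n : ℝ) + 1) * (r * α)) * den (n + 1)
      + -((2 * (n : ℝ) + 1) ^ 2 * α * (r * α)) * den n) (n : ℕ) :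
    num n + r * α * den n = P n ∧
      α * den n = P n * ∑ j ∈ Finset.range n, 1 / (2 * (j : ℝ) + 1) * r ^ j := by
  induction n using Nat.twoStepInduction with
  | zero => simp [hnum0, hden0, hP0]
  | one =>
    have := hP 0
    simp [hP0] at this
    simp [hnum1, hden1, this]
  | more n ih1 ih2 =>
    obtain ⟨h1, h2⟩ := ih1
    obtain ⟨h3, h4⟩ := ih2
    have e1 := hP n
    have e2 := hP (n + 1)
    push_cast at e2
    have e3 : P (n + 2) = (2 * (n : ℝ) + 3) * α * ((2 * (n : ℝ) + 1) * α * P n) := by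
      rw [e2, e1]; ring
    have p1 : (2 * (n : ℝ) + 1) ≠ 0 := by positivity
    have p3 : (2 * (n : ℝ) + 3) ≠ 0 := by positivity
    constructor
    · rw [hnum, hden, e3]
      rw [e1] at h3
      linear_combination ((2 * (n : ℝ) + 3) * α + (2 * (n : ℝ) + 1) * (r * α)) * h3
        - ((2 * (n : ℝ) + 1) ^ 2 * α * (r * α)) * h1
    · rw [hden, e3, Finset.sum_range_succ, Finset.sum_range_succ]
      rw [e1, Finset.sum_range_succ] at h4
      have p4 : (2 * ((n + 1 : ℕ) : ℝ) + 1) = 2 * (n : ℝ) + 3 := by push_cast; ring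
      rw [p4, pow_succ r n]
      generalize ∑ j ∈ Finset.range n, 1 / (2 * (j : ℝ) + 1) * r ^ j = S at *
      have : α * (((2 * (n : ℝ) + 3) * α + (2 * (n : ℝ) + 1) * (r * α)) * den (n + 1)
      + -((2 * (n : ℝ) + 1) ^ 2 * α * (r * α)) * den n) =
        ((2 * (n : ℝ) + 3) * α + (2 * (n : ℝ) + 1) * (r * α)) * (α * den (n + 1))
      + -((2 * (n : ℝ) + 1) ^ 2 * α * (r * α)) * (α * den n) := by ring
      rw [this, h4, h2]
      field_simp
      ring

theorem euler_cf_log_general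
    (α γ : ℝ) (a b num den : ℕ → ℝ)
    (hγ : 0 < γ) (hαγ : γ < α)
    (hb0 : b 0 = α - γ)
    (ha : ∀ k : ℕ, 1 ≤ k → a k = -((2 * (k : ℝ) - 1) ^ 2 * α * γ))
    (hb : ∀ k : ℕ, 1 ≤ k → b k = (2 * (k : ℝ) + 1) * α + (2 * (k : ℝ) - 1) * γ)
    (hnum0 : num 0 = 1) (hnum1 : num 1 = b 0)
    (hden0 : den 0 = 0) (hden1 : den 1 = 1)
    (hnum : ∀ n : ℕ, num (n + 2) = b (n + 1) * num (n + 1) + a (n + 1) * num n)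
    (hden : ∀ n : ℕ, den (n + 2) = b (n + 1) * den (n + 1) + a (n + 1) * den n) :
    Tendsto (fun n : ℕ => num (n + 1) / den (n + 1)) atTop
      (𝓝 (-γ + 2 * Real.sqrt (α * γ) / Real.log ((Real.sqrt α + Real.sqrt γ) / (Real.sqrt α - Real.sqrt γ)))) := by
  have hα : 0 < α := hγ.trans hαγ
  obtain ⟨s, hs, rfl⟩ : ∃ s : ℝ, 0 < s ∧ α = s ^ 2 :=
    ⟨√α, Real.sqrt_pos.2 hα, (Real.sq_sqrt hα.le).symm⟩
  obtain ⟨t, ht, rfl⟩ : ∃ t : ℝ, 0 < t ∧ γ = t ^ 2 :=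
    ⟨√γ, Real.sqrt_pos.2 hγ, (Real.sq_sqrt hγ.le).symm⟩
  have hts : t < s := lt_of_pow_lt_pow_left₀ 2 hs.le hαγ
  rw [← mul_pow, Real.sqrt_sq hs.le, Real.sqrt_sq ht.le, Real.sqrt_sq (by positivity)]
  obtain ⟨x, rfl⟩ : ∃ x : ℝ, t = x * s := ⟨t / s, by field_simp⟩
  have hx : 0 < x := pos_of_mul_pos_left ht hs.le
  have hx1 : x < 1 := by nlinarith
  let P : ℕ → ℝ := fun n => ∏ j ∈ Finset.range n, ((2 * (j : ℝ) + 1) * s ^ 2)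
  have hPpos : ∀ n, 0 < P n := fun n => Finset.prod_pos fun j _ => by positivity
  have key := euler_cf_aux (s ^ 2) (x ^ 2) num den P hα (by simp [P])
    (fun n => by simp only [P, Finset.prod_range_succ]; ring) hnum0
    (by rw [hnum1, hb0]; ring) hden0 hden1
    (fun n => by rw [hnum, ha _ (by omega), hb _ (by omega)]; push_cast; ring)
    (fun n => by rw [hden, ha _ (by omega), hb _ (by omega)]; push_cast; ring)
  set L := Real.log (1 + x) - Real.log (1 - x) with hL
  have hLeq : Real.log ((s + x * s) / (s - x * s)) = L := by
    rw [hL, ← Real.log_div (by linarith) (by linarith)]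
    congr 1
    have : (1 - x) ≠ 0 := by linarith
    rw [show s - x * s = (1 - x) * s by ring, show s + x * s = (1 + x) * s by ring]
    field_simp
  have hLpos : 0 < L := sub_pos.2 (Real.log_lt_log (by linarith) (by linarith))
  have hsum := (Real.hasSum_log_sub_log_of_abs_lt_one (x := x)
    (by rw [abs_of_pos hx]; exact hx1)).mul_left (1 / (2 * x))
  have hlim := hsum.tendsto_sum_nat
  have hT : Tendsto (fun n : ℕ => ∑ j ∈ Finset.range n, 1 / (2 * (j : ℝ) + 1) * (x ^ 2) ^ j)
      atTop (𝓝 (1 / (2 * x) * L)) := by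
    refine hlim.congr fun n => Finset.sum_congr rfl fun j _ => ?_
    rw [← pow_mul, pow_succ]
    field_simp
  have hT2 := ((tendsto_const_nhds (x := s ^ 2)).div (hT.comp (tendsto_add_atTop_nat 1))
    (by positivity)).const_add (-(x * s) ^ 2)
  rw [hLeq]
  have hval : -(x * s) ^ 2 + s ^ 2 / (1 / (2 * x) * L) = -(x * s) ^ 2 + 2 * (s * (x * s)) / L := by
    field_simp
  rw [hval] at hT2
  refine hT2.congr fun n => ?_
  obtain ⟨h1, h2⟩ := key (n + 1)
  have hp := hPpos (n + 1)
  have hS : 0 < ∑ j ∈ Finset.range (n + 1), 1 / (2 * (j : ℝ) + 1) * (x ^ 2) ^ j :=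
    Finset.sum_pos (fun j _ => by positivity) (by simp)
  simp only [Function.comp, Pi.div_apply]
  generalize ∑ j ∈ Finset.range (n + 1), 1 / (2 * (j : ℝ) + 1) * (x ^ 2) ^ j = S at *
  have hd : 0 < den (n + 1) := by
    have : 0 < s ^ 2 * den (n + 1) := by rw [h2]; positivity
    exact pos_of_mul_pos_right this hα.le
  have hn : num (n + 1) = P (n + 1) - x ^ 2 * s ^ 2 * den (n + 1) := by linarith
  have h3 : s ^ 2 / S = P (n + 1) / den (n + 1) := by
    rw [div_eq_div_iff hS.ne' hd.ne', h2]
  rw [hn, h3]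
  field_simp
  ring
end

section
/- Consider the generalized continued fraction with initial term b₀ = 3, partial numerators a_k = −4·(2k−1)², and partial denominators b_k = 10k + 3 for all k ≥ 1. Then the sequence of convergents h_n/k_n converges to −1 + 4/log 3. -/
open Filter Topology

/-- Partial sums of the series for `log 3`. -/
noncomputable def eulerS (n : ℕ) : ℝ := ∑ k ∈ Finset.range n, (1 / 4 : ℝ) ^ k / (2 * (k : ℝ) + 1)

/-- The normalising factor `4^(n-1) * (2n-1)!!`. -/
noncomputable def eulerC (n : ℕ) : ℝ := 4 ^ n / 4 * ∏ k ∈ Finset.range n, (2 * (k : ℝ) + 1)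

lemma eulerS_succ (n : ℕ) : eulerS (n + 1) = eulerS n + (1 / 4 : ℝ) ^ n / (2 * (n : ℝ) + 1) := by
  simp [eulerS, Finset.sum_range_succ]

lemma eulerC_succ (n : ℕ) : eulerC (n + 1) = 4 * (2 * (n : ℝ) + 1) * eulerC n := by
  simp only [eulerC, Finset.prod_range_succ, pow_succ]
  ring

lemma eulerC_pos (n : ℕ) : 0 < eulerC n := by
  unfold eulerC
  have : 0 < ∏ k ∈ Finset.range n, (2 * (k : ℝ) + 1) :=
    Finset.prod_pos fun k _ => by positivity
  positivity

lemma eulerS_tendsto : Tendsto eulerS atTop (𝓝 (Real.log 3)) := by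
  have h := Real.hasSum_log_sub_log_of_abs_lt_one (x := 1 / 2) (by norm_num [abs_of_pos])
  have e : Real.log (1 + 1 / 2) - Real.log (1 - 1 / 2) = Real.log 3 := by
    rw [← Real.log_div (by norm_num) (by norm_num)]
    norm_num
  rw [e] at h
  refine h.tendsto_sum_nat.congr fun n => ?_
  unfold eulerS
  refine Finset.sum_congr rfl fun k _ => ?_
  rw [pow_succ, pow_mul]
  norm_num
  ring

/-- Both solutions of the recurrence have the form `C n * (p + q * S n)`. -/
lemma euler_rec (y : ℕ → ℝ) (p q : ℝ)
    (h0 : y 0 = eulerC 0 * (p + q * eulerS 0)) (h1 : y 1 = eulerC 1 * (p + q * eulerS 1))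
    (h : ∀ n : ℕ, y (n + 2) = (10 * ((n : ℝ) + 1) + 3) * y (n + 1)
      + -(4 * (2 * ((n : ℝ) + 1) - 1) ^ 2) * y n) (n : ℕ) :
    y n = eulerC n * (p + q * eulerS n) := by
  induction n using Nat.twoStepInduction with
  | zero => exact h0
  | one => exact h1
  | more n ih1 ih2 =>
    rw [h, ih1, ih2, eulerS_succ (n + 1), eulerS_succ n, eulerC_succ (n + 1), eulerC_succ n,
      pow_succ (1 / 4 : ℝ) n]
    have a1 : (2 * (n : ℝ) + 1) ≠ 0 := by positivity
    have a2 : (2 * ((n : ℝ) + 1) + 1) ≠ 0 := by positivity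
    push_cast
    generalize (1 / 4 : ℝ) ^ n = t
    field_simp
    ring

theorem euler_cf_log_three
    (a b num den : ℕ → ℝ)
    (hb0 : b 0 = 3)
    (ha : ∀ k : ℕ, 1 ≤ k → a k = -(4 * (2 * (k : ℝ) - 1) ^ 2))
    (hb : ∀ k : ℕ, 1 ≤ k → b k = 10 * (k : ℝ) + 3)
    (hnum0 : num 0 = 1) (hnum1 : num 1 = b 0)
    (hden0 : den 0 = 0) (hden1 : den 1 = 1)
    (hnum : ∀ n : ℕ, num (n + 2) = b (n + 1) * num (n + 1) + a (n + 1) * num n)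
    (hden : ∀ n : ℕ, den (n + 2) = b (n + 1) * den (n + 1) + a (n + 1) * den n) :
    Tendsto (fun n : ℕ => num (n + 1) / den (n + 1)) atTop
      (𝓝 (-1 + 4 / Real.log 3)) := by
  have hn : ∀ n, num n = eulerC n * (4 + (-1) * eulerS n) := by
    apply euler_rec
    · simp [hnum0, eulerC, eulerS]
    · norm_num [hnum1, hb0, eulerC, eulerS]
    · intro n
      rw [hnum, ha _ (by omega), hb _ (by omega)]
      push_cast
      ring
  have hd : ∀ n, den n = eulerC n * (0 + 1 * eulerS n) := by
    apply euler_rec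
    · simp [hden0, eulerS]
    · norm_num [hden1, eulerC, eulerS]
    · intro n
      rw [hden, ha _ (by omega), hb _ (by omega)]
      push_cast
      ring
  have hl : Real.log 3 ≠ 0 := (Real.log_pos (by norm_num)).ne'
  have key : Tendsto (fun n => (4 + (-1) * eulerS n) / eulerS n) atTop
      (𝓝 ((4 + (-1) * Real.log 3) / Real.log 3)) :=
    ((eulerS_tendsto.const_mul (-1)).const_add 4).div eulerS_tendsto hl
  have e : -1 + 4 / Real.log 3 = (4 + (-1) * Real.log 3) / Real.log 3 := by
    field_simp
    ring
  rw [e]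
  refine (key.comp (tendsto_add_atTop_nat 1)).congr fun n => ?_
  simp only [Function.comp]
  rw [hn, hd, zero_add, one_mul, mul_div_mul_left _ _ (eulerC_pos _).ne']
end

section
/- Consider the generalized continued fraction with initial term b₀ = 8, partial numerators a_k = −9·(2k−1)², and partial denominators b_k = 20k + 8 for all k ≥ 1. Then the sequence of convergents h_n/k_n converges to −1 + 6/log 2. -/
open Filter Topology

lemma aux_sum : Tendsto (fun n : ℕ => ∑ k ∈ Finset.range n, 1 / ((9:ℝ) ^ k * (2 * k + 1))) atTop
    (𝓝 (3 / 2 * Real.log 2)) := by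
  have h := Real.hasSum_log_sub_log_of_abs_lt_one (x := 1/3) (by norm_num [abs_lt])
  have e : Real.log (1 + 1/3) - Real.log (1 - 1/3) = Real.log 2 := by
    rw [← Real.log_div (by norm_num) (by norm_num)]; norm_num
  rw [e] at h
  have h2 := (h.mul_left (3/2)).tendsto_sum_nat
  refine h2.congr fun n => Finset.sum_congr rfl fun k _ => ?_
  have : (2 * (k:ℝ) + 1) ≠ 0 := by positivity
  rw [pow_succ, pow_mul, div_pow, div_pow]
  field_simp
  norm_num

lemma aux_rec (a b u : ℕ → ℝ) (α β : ℝ)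
    (ha : ∀ k : ℕ, 1 ≤ k → a k = -(9 * (2 * (k : ℝ) - 1) ^ 2))
    (hb : ∀ k : ℕ, 1 ≤ k → b k = 20 * (k : ℝ) + 8)
    (h0 : u 0 = α / 9) (h1 : u 1 = α + β)
    (hu : ∀ n : ℕ, u (n + 2) = b (n + 1) * u (n + 1) + a (n + 1) * u n) (n : ℕ) :
    u n = (∏ k ∈ Finset.range n, (2 * (k:ℝ) + 1)) * 9 ^ n / 9 *
      (α + β * ∑ k ∈ Finset.range n, 1 / ((9:ℝ) ^ k * (2 * k + 1))) := by
  induction n using Nat.twoStepInduction with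
  | zero => simp [h0]; ring
  | one => simp [h1]
  | more n ih1 ih2 =>
    rw [hu, ih1, ih2, ha _ (by omega), hb _ (by omega)]
    simp only [Finset.prod_range_succ, Finset.sum_range_succ]
    generalize ∏ k ∈ Finset.range n, (2 * (k:ℝ) + 1) = P
    generalize ∑ k ∈ Finset.range n, 1 / ((9:ℝ) ^ k * (2 * k + 1)) = S
    have h3 : (2 * (n:ℝ) + 1) ≠ 0 := by positivity
    have h4 : (2 * ((n:ℝ) + 1) + 1) ≠ 0 := by positivity
    push_cast
    rw [pow_succ, pow_succ]
    field_simp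
    ring

theorem euler_cf_log_two_alt
    (a b num den : ℕ → ℝ)
    (hb0 : b 0 = 8)
    (ha : ∀ k : ℕ, 1 ≤ k → a k = -(9 * (2 * (k : ℝ) - 1) ^ 2))
    (hb : ∀ k : ℕ, 1 ≤ k → b k = 20 * (k : ℝ) + 8)
    (hnum0 : num 0 = 1) (hnum1 : num 1 = b 0)
    (hden0 : den 0 = 0) (hden1 : den 1 = 1)
    (hnum : ∀ n : ℕ, num (n + 2) = b (n + 1) * num (n + 1) + a (n + 1) * num n)
    (hden : ∀ n : ℕ, den (n + 2) = b (n + 1) * den (n + 1) + a (n + 1) * den n) :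
    Tendsto (fun n : ℕ => num (n + 1) / den (n + 1)) atTop
      (𝓝 (-1 + 6 / Real.log 2)) := by
  have hN := aux_rec a b num 9 (-1) ha hb (by rw [hnum0]; norm_num) (by rw [hnum1, hb0]; norm_num) hnum
  have hD := aux_rec a b den 0 1 ha hb (by rw [hden0]; norm_num) (by rw [hden1]; norm_num) hden
  have hS := (tendsto_add_atTop_iff_nat 1).2 aux_sum
  have hl : 0 < Real.log 2 := Real.log_pos (by norm_num)
  have hT := (hS.const_sub 9).div hS (by positivity)
  have e : (9 - 3 / 2 * Real.log 2) / (3 / 2 * Real.log 2) = -1 + 6 / Real.log 2 := by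
    field_simp
    ring
  rw [e] at hT
  refine hT.congr fun n => ?_
  have hP : (∏ k ∈ Finset.range (n + 1), (2 * (k:ℝ) + 1)) * 9 ^ (n + 1) / 9 ≠ 0 := by positivity
  rw [hN, hD, mul_div_mul_left _ _ hP]
  simp only [Pi.div_apply]
  congr 1 <;> ring
end

section
/- Let α be a real number and n ≥ 1 a natural number. Then n·∫₀¹ x^{n-1}·e^{αx} dx = (n + 1 − α)·∫₀¹ x^n·e^{αx} dx + α·∫₀¹ x^{n+1}·e^{αx} dx. -/
theorem euler_exp_integral_recurrence (α : ℝ) (n : ℕ) (hn : 1 ≤ n) :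
    (n : ℝ) * ∫ x in (0 : ℝ)..1, x ^ (n - 1) * Real.exp (α * x) =
      ((n : ℝ) + 1 - α) * (∫ x in (0 : ℝ)..1, x ^ n * Real.exp (α * x)) +
      α * ∫ x in (0 : ℝ)..1, x ^ (n + 1) * Real.exp (α * x) := by
  obtain ⟨m, rfl⟩ : ∃ m, n = m + 1 := ⟨n - 1, by omega⟩
  have hi : ∀ (c : ℝ) (k : ℕ), IntervalIntegrable
      (fun x : ℝ => c * (x ^ k * Real.exp (α * x))) MeasureTheory.volume 0 1 := by
    intro c k
    apply Continuous.intervalIntegrable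
    fun_prop
  have key : ∫ x in (0 : ℝ)..1,
      (((m + 1 : ℕ) : ℝ) * (x ^ m * Real.exp (α * x))
        - (((m + 1 : ℕ) : ℝ) + 1 - α) * (x ^ (m + 1) * Real.exp (α * x))
        - α * (x ^ (m + 1 + 1) * Real.exp (α * x))) = 0 := by
    rw [intervalIntegral.integral_eq_sub_of_hasDerivAt
      (f := fun x : ℝ => x ^ (m + 1) * Real.exp (α * x) * (1 - x))]
    · simp
    · intro x _
      have h1 := hasDerivAt_pow (m + 1) x
      have h2 : HasDerivAt (fun x : ℝ => Real.exp (α * x)) (Real.exp (α * x) * (α * 1)) x :=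
        ((hasDerivAt_id x).const_mul α).exp
      have h3 : HasDerivAt (fun x : ℝ => 1 - x) (-1) x := (hasDerivAt_id x).const_sub 1
      refine ((h1.mul h2).mul h3).congr_deriv ?_
      simp only [Nat.add_sub_cancel, Pi.mul_apply]
      ring
    · exact ((hi _ _).sub (hi _ _)).sub (hi _ _)
  rw [intervalIntegral.integral_sub ((hi _ _).sub (hi _ _)) (hi _ _),
    intervalIntegral.integral_sub (hi _ _) (hi _ _)] at key
  simp only [intervalIntegral.integral_const_mul] at key
  simp only [Nat.add_sub_cancel]
  linarith
end

section
/- Let α be a real number with 0 < α ≤ 1. Consider the generalized continued fraction with initial term b₀ = 1 − α, partial numerators a_k = k·α, and partial denominators b_k = k + 1 − α for all k ≥ 1. Then the sequence of convergents h_n/k_n converges to α/(e^α − 1). -/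
open Filter Topology

theorem euler_cf_exp
    (α : ℝ) (a b num den : ℕ → ℝ)
    (hα0 : 0 < α) (hα1 : α ≤ 1)
    (hb0 : b 0 = 1 - α)
    (ha : ∀ k : ℕ, 1 ≤ k → a k = (k : ℝ) * α)
    (hb : ∀ k : ℕ, 1 ≤ k → b k = (k : ℝ) + 1 - α)
    (hnum0 : num 0 = 1) (hnum1 : num 1 = b 0)
    (hden0 : den 0 = 0) (hden1 : den 1 = 1)
    (hnum : ∀ n : ℕ, num (n + 2) = b (n + 1) * num (n + 1) + a (n + 1) * num n)
    (hden : ∀ n : ℕ, den (n + 2) = b (n + 1) * den (n + 1) + a (n + 1) * den n) :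
    Tendsto (fun n : ℕ => num (n + 1) / den (n + 1)) atTop
      (𝓝 (α / (Real.exp α - 1))) := by
  have h1 : ∀ n : ℕ, num (n + 1) = (n + 1) * num n + (-α) ^ (n + 1) := by
    intro n
    induction n with
    | zero => simp [hnum0, hnum1, hb0]; ring
    | succ k ih =>
      rw [hnum k, ha (k + 1) (by omega), hb (k + 1) (by omega), pow_succ]
      push_cast
      linear_combination (-α) * ih
  have h2 : ∀ n : ℕ, den (n + 1) = (n + 1) * den n + (-α) ^ n := by
    intro n
    induction n with
    | zero => simp [hden0, hden1]
    | succ k ih =>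
      rw [hden k, ha (k + 1) (by omega), hb (k + 1) (by omega), pow_succ]
      push_cast
      linear_combination (-α) * ih
  have h3 : ∀ n : ℕ, num n
      = (n.factorial : ℝ) * ∑ k ∈ Finset.range (n + 1), (-α) ^ k / (k.factorial : ℝ) := by
    intro n
    induction n with
    | zero => simp [hnum0]
    | succ k ih =>
      have hk : ((k + 1).factorial : ℝ) ≠ 0 := by positivity
      rw [Finset.sum_range_succ, mul_add, mul_div_cancel₀ _ hk, h1 k, ih, Nat.factorial_succ]
      push_cast
      ring
  have h4 : ∀ n : ℕ, den n = ((n.factorial : ℝ) - num n) / α := by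
    intro n
    rw [eq_div_iff hα0.ne']
    induction n with
    | zero => simp [hden0, hnum0]
    | succ k ih =>
      rw [h1 k, h2 k, Nat.factorial_succ, pow_succ]
      push_cast
      linear_combination ((k : ℝ) + 1) * ih
  have hS : Tendsto (fun n : ℕ => ∑ k ∈ Finset.range (n + 1), (-α) ^ k / (k.factorial : ℝ)) atTop
      (𝓝 (Real.exp (-α))) := by
    have h := NormedSpace.expSeries_div_hasSum_exp (-α)
    rw [← Real.exp_eq_exp_ℝ] at h
    exact h.tendsto_sum_nat.comp (tendsto_add_atTop_nat 1)
  have hlt : Real.exp (-α) < 1 := by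
    rw [Real.exp_lt_one_iff]
    linarith
  have hgt : 1 < Real.exp α := Real.one_lt_exp_iff.mpr hα0
  have hval : α / (Real.exp α - 1) = α * Real.exp (-α) / (1 - Real.exp (-α)) := by
    rw [div_eq_div_iff (by linarith) (by linarith)]
    have : Real.exp (-α) * Real.exp α = 1 := by rw [← Real.exp_add]; simp
    linear_combination (-α) * this
  have hT : Tendsto (fun n : ℕ => num n / den n) atTop (𝓝 (α / (Real.exp α - 1))) := by
    rw [hval]
    refine ((hS.const_mul α).div (hS.const_sub 1) (by linarith)).congr ?_
    intro n
    have hn : (n.factorial : ℝ) ≠ 0 := by positivity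
    simp only [Pi.div_apply]
    rw [h4 n, h3 n]
    generalize (∑ k ∈ Finset.range (n + 1), (-α) ^ k / (k.factorial : ℝ)) = S
    rw [show (n.factorial : ℝ) - n.factorial * S = n.factorial * (1 - S) by ring,
      div_div_eq_mul_div, mul_assoc, mul_div_mul_left _ _ hn, mul_comm]
  exact hT.comp (tendsto_add_atTop_nat 1)
end

section
/- Consider the generalized continued fraction with initial term b₀ = 2, partial numerator a₁ = 1 and a_k = k − 1 for k ≥ 2, and partial denominators b_k = k for all k ≥ 1. Then the sequence of convergents h_n/k_n converges to e. -/
open Filter Topology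

theorem euler_cf_e
    (a b num den : ℕ → ℝ)
    (hb0 : b 0 = 2)
    (ha1 : a 1 = 1) (ha : ∀ k : ℕ, 2 ≤ k → a k = (k : ℝ) - 1)
    (hb : ∀ k : ℕ, 1 ≤ k → b k = (k : ℝ))
    (hnum0 : num 0 = 1) (hnum1 : num 1 = b 0)
    (hden0 : den 0 = 0) (hden1 : den 1 = 1)
    (hnum : ∀ n : ℕ, num (n + 2) = b (n + 1) * num (n + 1) + a (n + 1) * num n)
    (hden : ∀ n : ℕ, den (n + 2) = b (n + 1) * den (n + 1) + a (n + 1) * den n) :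
    Tendsto (fun n : ℕ => num (n + 1) / den (n + 1)) atTop
      (𝓝 (Real.exp 1)) := by
  have hN : ∀ n : ℕ, num (n + 1) = ((n : ℝ) + 2) * (n.factorial : ℝ) ∧
      num (n + 2) = ((n : ℝ) + 3) * ((n + 1).factorial : ℝ) := by
    intro n
    induction n with
    | zero =>
      refine ⟨by simp [hnum1, hb0], ?_⟩
      rw [hnum 0, hb (0 + 1) (by norm_num), ha1, hnum0, hnum1, hb0]
      norm_num
    | succ k ih =>
      obtain ⟨h1, h2⟩ := ih
      refine ⟨by rw [h2]; push_cast; ring, ?_⟩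
      rw [hnum (k + 1), h1, h2, hb (k + 1 + 1) (by omega), ha (k + 1 + 1) (by omega)]
      simp only [Nat.factorial_succ]
      push_cast
      ring
  have hD : ∀ n : ℕ, den (n + 1) = (numDerangements n : ℝ) + numDerangements (n + 1) ∧
      den (n + 2) = (numDerangements (n + 1) : ℝ) + numDerangements (n + 2) := by
    intro n
    induction n with
    | zero =>
      refine ⟨by simp [hden1], ?_⟩
      rw [hden 0, hb (0 + 1) (by norm_num), ha1, hden0, hden1, numDerangements_add_two]
      simp
    | succ k ih =>
      obtain ⟨h1, h2⟩ := ih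
      refine ⟨h2, ?_⟩
      rw [hden (k + 1), h1, h2, hb (k + 1 + 1) (by omega), ha (k + 1 + 1) (by omega),
        numDerangements_add_two (k + 1), numDerangements_add_two k]
      push_cast
      ring
  have hlim := (numDerangements_tendsto_inv_e.comp (tendsto_add_atTop_nat 2)).inv₀
    (Real.exp_ne_zero _)
  rw [← Real.exp_neg, neg_neg] at hlim
  refine hlim.congr fun n => ?_
  have hn : (n : ℝ) + 1 ≠ 0 := by positivity
  simp only [Function.comp]
  rw [(hN n).1, (hD n).1, inv_div, numDerangements_add_two, Nat.factorial_succ, Nat.factorial_succ]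
  push_cast
  rw [show ((n : ℝ) + 1 + 1) * ((n + 1) * n.factorial) = (n + 1) * ((n + 2) * n.factorial) by ring,
    mul_div_mul_left _ _ hn]
end

section
/- Consider the generalized continued fraction with initial term b₀ = 1, partial numerators a_k = 2k, and partial denominators b_k = 2k + 1 for all k ≥ 1. Then the sequence of convergents h_n/k_n converges to 1/(√e − 1). -/
open Filter Topology

theorem euler_cf_sqrt_e
    (a b num den : ℕ → ℝ)
    (hb0 : b 0 = 1)
    (ha : ∀ k : ℕ, 1 ≤ k → a k = 2 * (k : ℝ))
    (hb : ∀ k : ℕ, 1 ≤ k → b k = 2 * (k : ℝ) + 1)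
    (hnum0 : num 0 = 1) (hnum1 : num 1 = b 0)
    (hden0 : den 0 = 0) (hden1 : den 1 = 1)
    (hnum : ∀ n : ℕ, num (n + 2) = b (n + 1) * num (n + 1) + a (n + 1) * num n)
    (hden : ∀ n : ℕ, den (n + 2) = b (n + 1) * den (n + 1) + a (n + 1) * den n) :
    Tendsto (fun n : ℕ => num (n + 1) / den (n + 1)) atTop
      (𝓝 (1 / (Real.exp (1 / 2) - 1))) := by
  have hu : ∀ n : ℕ, num (n + 1) = (2 * (n : ℝ) + 2) * num n - (-1) ^ n := by
    intro n
    induction n with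
    | zero => rw [hnum1, hb0, hnum0]; norm_num
    | succ n ih =>
      rw [hnum n, ha (n + 1) (by omega), hb (n + 1) (by omega), pow_succ]
      push_cast
      linear_combination (-1 : ℝ) * ih
  have hv : ∀ n : ℕ, den (n + 1) = (2 * (n : ℝ) + 2) * den n + (-1) ^ n := by
    intro n
    induction n with
    | zero => rw [hden1, hden0]; norm_num
    | succ n ih =>
      rw [hden n, ha (n + 1) (by omega), hb (n + 1) (by omega), pow_succ]
      push_cast
      linear_combination (-1 : ℝ) * ih
  set S : ℕ → ℝ := fun n => ∑ k ∈ Finset.range n, (-1 / 2 : ℝ) ^ k / (k.factorial : ℝ) with hS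
  have hSs : ∀ n : ℕ, 2 ^ (n + 1) * ((n + 1).factorial : ℝ) * S (n + 2)
      = 2 ^ (n + 1) * ((n + 1).factorial : ℝ) * S (n + 1) - (-1) ^ n := by
    intro n
    have h1 : S (n + 2) = S (n + 1) + (-1 / 2 : ℝ) ^ (n + 1) / ((n + 1).factorial : ℝ) :=
      Finset.sum_range_succ _ _
    have h2 : ((n + 1).factorial : ℝ) ≠ 0 := by positivity
    rw [h1, div_pow, pow_succ (-1 : ℝ)]
    field_simp
    ring
  have hN : ∀ n : ℕ, num n = 2 ^ n * (n.factorial : ℝ) * S (n + 1) := by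
    intro n
    induction n with
    | zero => simp [hnum0, hS]
    | succ n ih =>
      rw [hu, hSs, ih, Nat.factorial_succ]
      push_cast
      ring
  have hD : ∀ n : ℕ, den n = 2 ^ n * (n.factorial : ℝ) * (1 - S (n + 1)) := by
    intro n
    induction n with
    | zero => simp [hden0, hS]
    | succ n ih =>
      rw [hv, mul_sub, hSs, ih, Nat.factorial_succ]
      push_cast
      ring
  have hlim : Tendsto S atTop (𝓝 (Real.exp (-1 / 2))) := by
    have h := NormedSpace.expSeries_div_hasSum_exp (-1 / 2 : ℝ)
    rw [← Real.exp_eq_exp_ℝ] at h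
    exact h.tendsto_sum_nat
  have hlt : Real.exp (-1 / 2) < 1 := Real.exp_lt_one_iff.mpr (by norm_num)
  have hval : 1 / (Real.exp (1 / 2) - 1) = Real.exp (-1 / 2) / (1 - Real.exp (-1 / 2)) := by
    have h1 : (1 : ℝ) < Real.exp (1 / 2) := Real.one_lt_exp_iff.mpr (by norm_num)
    have h2 : Real.exp (-1 / 2) * Real.exp (1 / 2) = 1 := by
      rw [← Real.exp_add]; norm_num
    rw [div_eq_div_iff (by linarith) (by linarith)]
    linear_combination -h2
  have hl2 : Tendsto (fun n : ℕ => S (n + 2)) atTop (𝓝 (Real.exp (-1 / 2))) :=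
    hlim.comp (tendsto_add_atTop_nat 2)
  rw [hval]
  refine (hl2.div (hl2.const_sub 1) (by linarith)).congr ?_
  intro n
  rw [hN, hD, mul_div_mul_left]
  · rfl
  · positivity
end

section
/- Consider the generalized continued fraction with initial term b₀ = 2, partial numerators a_k = 3k, and partial denominators b_k = 3k + 2 for all k ≥ 1. Then the sequence of convergents h_n/k_n converges to 1/(e^{1/3} − 1). -/
open Filter Topology

theorem euler_cf_cbrt_e
    (a b num den : ℕ → ℝ)
    (hb0 : b 0 = 2)
    (ha : ∀ k : ℕ, 1 ≤ k → a k = 3 * (k : ℝ))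
    (hb : ∀ k : ℕ, 1 ≤ k → b k = 3 * (k : ℝ) + 2)
    (hnum0 : num 0 = 1) (hnum1 : num 1 = b 0)
    (hden0 : den 0 = 0) (hden1 : den 1 = 1)
    (hnum : ∀ n : ℕ, num (n + 2) = b (n + 1) * num (n + 1) + a (n + 1) * num n)
    (hden : ∀ n : ℕ, den (n + 2) = b (n + 1) * den (n + 1) + a (n + 1) * den n) :
    Tendsto (fun n : ℕ => num (n + 1) / den (n + 1)) atTop
      (𝓝 (1 / (Real.exp (1 / 3) - 1))) := by
  have ha' : ∀ n : ℕ, a (n + 1) = 3 * ((n : ℝ) + 1) := by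
    intro n; rw [ha _ (by omega)]; push_cast; ring
  have hb' : ∀ n : ℕ, b (n + 1) = 3 * ((n : ℝ) + 1) + 2 := by
    intro n; rw [hb _ (by omega)]; push_cast; ring
  have hn1 : ∀ n : ℕ, num (n + 1) = 3 * ((n : ℝ) + 1) * num n - (-1) ^ n := by
    intro n
    induction n with
    | zero => rw [hnum1, hb0, hnum0]; norm_num
    | succ k ih =>
      rw [hnum, ha', hb']; push_cast; rw [pow_succ]; linarith
  have hd1 : ∀ n : ℕ, den (n + 1) = 3 * ((n : ℝ) + 1) * den n + (-1) ^ n := by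
    intro n
    induction n with
    | zero => rw [hden1, hden0]; norm_num
    | succ k ih =>
      rw [hden, ha', hb']; push_cast; rw [pow_succ]; linarith
  set S : ℕ → ℝ := fun n => ∑ k ∈ Finset.range n, (-1 / 3 : ℝ) ^ k / (k.factorial : ℝ) with hS
  have hc : ∀ n : ℕ, (3 : ℝ) ^ (n + 1) * ((n + 1).factorial : ℝ)
      * ((-1 / 3 : ℝ) ^ (n + 1) / ((n + 1).factorial : ℝ)) = -(-1) ^ n := by
    intro n
    have h : ((n + 1).factorial : ℝ) ≠ 0 := by positivity
    rw [mul_assoc, mul_div_cancel₀ _ h, ← mul_pow]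
    norm_num [pow_succ]
  have hfac : ∀ n : ℕ, (3 : ℝ) ^ (n + 1) * ((n + 1).factorial : ℝ)
      = 3 * ((n : ℝ) + 1) * (3 ^ n * (n.factorial : ℝ)) := by
    intro n; rw [Nat.factorial_succ]; push_cast; ring
  have hSs : ∀ n : ℕ, S (n + 1 + 1) = S (n + 1)
      + (-1 / 3 : ℝ) ^ (n + 1) / ((n + 1).factorial : ℝ) := by
    intro n; exact Finset.sum_range_succ _ _
  have hN : ∀ n : ℕ, num n = 3 ^ n * (n.factorial : ℝ) * S (n + 1) := by
    intro n
    induction n with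
    | zero => rw [hnum0]; simp [hS]
    | succ k ih => rw [hn1, hSs, mul_add (3 ^ (k + 1) * ((k + 1).factorial : ℝ)), hc, hfac, ih]; ring
  have hD : ∀ n : ℕ, den n = 3 ^ n * (n.factorial : ℝ) * (1 - S (n + 1)) := by
    intro n
    induction n with
    | zero => rw [hden0]; simp [hS]
    | succ k ih => rw [hd1, hSs, ← sub_sub, mul_sub, hc, hfac, ih]; ring
  have hlim : Tendsto S atTop (𝓝 (Real.exp (-1 / 3))) := by
    have h := (NormedSpace.expSeries_div_hasSum_exp (-1 / 3 : ℝ)).tendsto_sum_nat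
    rw [← Real.exp_eq_exp_ℝ] at h
    exact h
  have hlt : Real.exp (-1 / 3) < 1 := by
    rw [Real.exp_lt_one_iff]; norm_num
  have hquot : (fun n : ℕ => num (n + 1) / den (n + 1))
      = fun n : ℕ => S (n + 2) / (1 - S (n + 2)) := by
    funext n
    rw [hN, hD]
    exact mul_div_mul_left _ _ (by positivity)
  have hval : 1 / (Real.exp (1 / 3) - 1) = Real.exp (-1 / 3) / (1 - Real.exp (-1 / 3)) := by
    have h1 : Real.exp (1 / 3) * Real.exp (-1 / 3) = 1 := by
      rw [← Real.exp_add]; norm_num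
    have h2 : (1 : ℝ) < Real.exp (1 / 3) := by
      rw [Real.one_lt_exp_iff]; norm_num
    rw [div_eq_div_iff (by linarith) (by linarith)]
    linarith
  rw [hquot, hval]
  have h2 := hlim.comp (tendsto_add_atTop_nat 2)
  exact h2.div (tendsto_const_nhds.sub h2) (by linarith)
end
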